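/- arXiv:2206.00072 — 2 statements merged into one kernel-verified Lean document; each statement's English description precedes it below -/
import Mathlib

section
/- Let F be a finite field with q elements, let 1 ≤ l ≤ n, and let M be an n×n upper-triangular matrix over F[x] with det(M) ≠ 0, written in block form M = [[D, *],[0, *]] where D is the top-left l×l block. Then there exists an upper-triangular n×n matrix M' = [[D', *],[0, *]] over F[x] such that D' (the top-left l×l block of M') is a diagonal matrix, deg(det(D')) ≥ deg(det(D)), deg(det(M')) = deg(det(M)), and for every natural number k, the number of g ∈ GL_n(F[x]) such that gM satisfies P(k) equals the number of g ∈ GL_n(F[x]) such that gM' satisfies P(k). -/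
open Polynomial Matrix

/-!
Reducing the rows of `M` by unimodular row operations, one reaches `R = uM` whose leading row
coefficients, in the row degrees `d i`, are linearly independent. No cancellation of leading terms
can then occur in `gR`, so whether `gR` satisfies `P(k)` depends only on `g` and `d`; the diagonal
matrix `M'` with entries `X ^ d i` has the same property, and `g ↦ gu` is the required bijection.
Degrees of determinants are sums of row degrees. For the corner `D`, some minor of `u` on its
columns is nonzero, and after permuting the rows of `u` this is the top-left one, so that
`deg det D` is at most the sum of the corresponding `d i`.
-/

section LinearAlgebra

variable {R l m n o p q : Type*}

lemma linearIndependent_row_mul [Semiring R] [Finite l] [Fintype m] {A : Matrix l m R}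
    {B : Matrix m n R} (hA : LinearIndependent R A.row) (hB : LinearIndependent R B.row) :
    LinearIndependent R (A * B).row := by
  have := Fintype.ofFinite l
  rw [← vecMul_injective_iff] at hA hB ⊢
  intro v w hvw
  simp only [← vecMul_vecMul] at hvw
  exact hA (hB hvw)

lemma submatrix_mul_of_forall_notMem_range [NonUnitalNonAssocSemiring R] [Fintype m] [Fintype n]
    (A : Matrix l m R) (B : Matrix m p R) (r : o → l) (e : n ↪ m) (c : q → p)
    (hB : ∀ i ∉ Set.range e, ∀ j, B i (c j) = 0) :
    (A * B).submatrix r c = A.submatrix r e * B.submatrix e c := by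
  ext i j
  simp only [submatrix_apply, mul_apply]
  refine (Finset.sum_of_injOn e e.injective.injOn (by simp) (fun a _ ha => ?_) fun _ _ => rfl).symm
  rw [hB a (by simpa using ha), mul_zero]

lemma exists_submatrix_det_ne_zero {K : Type*} [Field K] [Finite m] [Fintype n] [DecidableEq n]
    {A : Matrix m n K} (hA : LinearIndependent K A.col) :
    ∃ f : n → m, Function.Injective f ∧ (A.submatrix f id).det ≠ 0 := by
  have := Fintype.ofFinite m
  obtain ⟨r, a, ha, hspan, hrows⟩ := exists_linearIndependent' K A.row
  have := Fintype.ofInjective a ha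
  have hcard : Fintype.card n = Fintype.card r := by
    rw [← LinearIndependent.rank_matrix (M := Aᵀ) hA, rank_transpose, rank_eq_finrank_span_row,
      ← hspan, finrank_span_eq_card hrows]
  let b : n ≃ r := Fintype.equivOfCardEq hcard
  refine ⟨a ∘ b, ha.comp b.injective, ?_⟩
  have hsub : LinearIndependent K (A.submatrix (a ∘ b) id).row := hrows.comp b b.injective
  exact ((isUnit_iff_isUnit_det _).mp (linearIndependent_rows_iff_isUnit.mp hsub)).ne_zero

variable [CommRing R] [Fintype m] [DecidableEq m]

theorem exists_perm_submatrix_det_ne_zero [IsDomain R] [Fintype n] [DecidableEq n]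
    {A : Matrix m m R} (hA : A.det ≠ 0) (e : n ↪ m) :
    ∃ σ : Equiv.Perm m, (A.submatrix (σ ∘ e) e).det ≠ 0 := by
  let φ := algebraMap R (FractionRing R)
  have hφ : Function.Injective φ := IsFractionRing.injective R (FractionRing R)
  have hAφ : (A.map φ).det ≠ 0 := by
    rw [← RingHom.mapMatrix_apply, ← RingHom.map_det]
    exact (map_ne_zero_iff φ hφ).mpr hA
  have hcols : LinearIndependent (FractionRing R) ((A.map φ).submatrix id e).col :=
    (linearIndependent_cols_of_det_ne_zero hAφ).comp e e.injective
  obtain ⟨f, hf, hdet⟩ := exists_submatrix_det_ne_zero hcols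
  obtain ⟨σ, hσ⟩ := Equiv.Perm.exists_extending_pair e f e.injective hf
  refine ⟨σ, fun h => hdet ?_⟩
  rw [show σ ∘ e = f from funext hσ] at h
  have := congrArg φ h
  rwa [RingHom.map_det, map_zero] at this

lemma exists_gl_eq_submatrix (σ : Equiv.Perm m) (u : GL m R) :
    ∃ w : GL m R, (w : Matrix m m R) = (u : Matrix m m R).submatrix σ id := by
  have hσ : IsUnit (σ.permMatrix R).det := by
    rw [det_permutation]
    exact (Equiv.Perm.sign σ).isUnit.map (Int.castRingHom R)
  exact ⟨GeneralLinearGroup.mk'' _ hσ * u, PEquiv.toMatrix_toPEquiv_mul σ _⟩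

lemma det_one_updateRow (i : m) (c : m → R) :
    ((1 : Matrix m m R).updateRow i c).det = c i := by
  have := det_updateRow_sum (1 : Matrix m m R) i c
  rwa [← vecMul_eq_sum, vecMul_one, det_one, smul_eq_mul, mul_one] at this

lemma exists_gl_mul_eq_updateRow (i : m) (c : m → R) (A : Matrix m n R) (hc : IsUnit (c i)) :
    ∃ u : GL m R, (u : Matrix m m R) * A = A.updateRow i (c ᵥ* A) := by
  refine ⟨GeneralLinearGroup.mk'' _ ((det_one_updateRow i c).symm ▸ hc), ?_⟩
  exact (updateRow_mul 1 i c A).trans (by rw [Matrix.one_mul])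

end LinearAlgebra

section RowCoefficients

variable {R l m n o : Type*} [Semiring R]

/-- The matrix of the coefficients of `X ^ d i` in the entries of row `i` of `A`. When `d i` bounds
the degrees in row `i`, this is the leading row coefficient matrix of `A` at the degrees `d`. -/
def rowCoeff (A : Matrix m n R[X]) (d : m → ℕ) : Matrix m n R :=
  of fun i j => (A i j).coeff (d i)

/-- `A` is row reduced with row degrees `d`: row `i` of `A` has degree at most `d i`, and the
leading coefficient vectors of the rows are linearly independent. -/
structure IsRowReduced (A : Matrix m n R[X]) (d : m → ℕ) : Prop where
  degree_le : ∀ i j, (A i j).degree ≤ d i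
  linearIndependent : LinearIndependent R (rowCoeff A d).row

lemma IsRowReduced.submatrix_left {A : Matrix m n R[X]} {d : m → ℕ} (hA : IsRowReduced A d)
    {f : l → m} (hf : Function.Injective f) : IsRowReduced (A.submatrix f id) (d ∘ f) where
  degree_le i j := hA.degree_le (f i) j
  linearIndependent := hA.linearIndependent.comp f hf

lemma coeff_mul_of_degree_add_le {p q : R[X]} {d k : ℕ} (hq : q.degree ≤ d)
    (hp : p.degree + d ≤ k) : (p * q).coeff k = p.coeff (k - d) * q.coeff d := by
  rcases eq_or_ne p 0 with rfl | hp0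
  · simp
  · rw [degree_eq_natDegree hp0] at hp
    norm_cast at hp
    conv_lhs => rw [← Nat.sub_add_cancel (show d ≤ k by lia)]
    exact coeff_mul_add_eq_of_natDegree_le (by lia) (natDegree_le_of_degree_le hq)

lemma isRowReduced_diagonal_X_pow [Finite m] [DecidableEq m] (d : m → ℕ) :
    IsRowReduced (diagonal fun i => (X : R[X]) ^ d i) d where
  degree_le i j := by
    rcases eq_or_ne i j with rfl | hij
    · simpa using degree_X_pow_le (d i)
    · simp [hij]
  linearIndependent := by
    have := Fintype.ofFinite m
    have hcoeff : rowCoeff (diagonal fun i => (X : R[X]) ^ d i) d = 1 := by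
      ext i j
      rcases eq_or_ne i j with rfl | hij <;> simp [rowCoeff, *]
    rw [hcoeff]
    exact linearIndependent_rows_of_isUnit isUnit_one

variable [Fintype m] {A : Matrix m n R[X]} {d : m → ℕ} {p : m → R[X]}

lemma degree_vecMul_le {k : WithBot ℕ} (hA : ∀ i j, (A i j).degree ≤ d i)
    (hp : ∀ i, (p i).degree + d i ≤ k) (j : n) : ((p ᵥ* A) j).degree ≤ k := by
  refine (degree_sum_le _ _).trans (Finset.sup_le fun i _ => ?_)
  calc (p i * A i j).degree
      ≤ (p i).degree + (A i j).degree := degree_mul_le _ _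
    _ ≤ (p i).degree + d i := by gcongr; exact hA i j
    _ ≤ k := hp i

lemma coeff_vecMul_of_degree_add_le {k : ℕ} (hA : ∀ i j, (A i j).degree ≤ d i)
    (hp : ∀ i, (p i).degree + d i ≤ k) (j : n) :
    ((p ᵥ* A) j).coeff k = ((fun i => (p i).coeff (k - d i)) ᵥ* rowCoeff A d) j := by
  simp only [vecMul, dotProduct, finsetSum_coeff, rowCoeff, of_apply]
  exact Finset.sum_congr rfl fun i _ => coeff_mul_of_degree_add_le (hA i j) (hp i)

-- If the largest degree of the terms `p i * A i` exceeded `k`, the terms attaining it would have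
-- to cancel, which is a linear relation between the rows of `rowCoeff A d`.
theorem IsRowReduced.degree_vecMul_le_iff (hA : IsRowReduced A d) (p : m → R[X]) (k : ℕ) :
    (∀ j, ((p ᵥ* A) j).degree ≤ k) ↔ ∀ i, (p i).degree + d i ≤ k := by
  refine ⟨fun hk => ?_, degree_vecMul_le hA.degree_le⟩
  by_contra! ⟨i₁, hi₁⟩
  obtain ⟨i₀, -, hmax⟩ :=
    Finset.univ.exists_max_image (fun i => (p i).degree + d i) ⟨i₁, Finset.mem_univ i₁⟩
  have hi₀ : k < (p i₀).degree + d i₀ := hi₁.trans_le (hmax i₁ (Finset.mem_univ i₁))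
  have hp₀ : p i₀ ≠ 0 := by
    intro h
    simp [h] at hi₀
  set N := (p i₀).natDegree + d i₀ with hN
  have hdeg : (p i₀).degree + d i₀ = N := by simp [hN, degree_eq_natDegree hp₀]
  have hvanish : (fun i => (p i).coeff (N - d i)) ᵥ* rowCoeff A d = 0 ᵥ* rowCoeff A d := by
    ext j
    rw [← coeff_vecMul_of_degree_add_le hA.degree_le
      (fun i => hdeg ▸ hmax i (Finset.mem_univ i)), zero_vecMul, Pi.zero_apply]
    exact coeff_eq_zero_of_degree_lt ((hk j).trans_lt (hdeg ▸ hi₀))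
  have hcoeff := congrFun (vecMul_injective_iff.mpr hA.linearIndependent hvanish) i₀
  simp [hN, hp₀] at hcoeff

theorem IsRowReduced.forall_degree_mul_le_iff {B : Matrix m o R[X]} (hA : IsRowReduced A d)
    (hB : IsRowReduced B d) (P : Matrix l m R[X]) (k : ℕ) :
    (∀ i j, ((P * A) i j).degree ≤ k) ↔ ∀ i j, ((P * B) i j).degree ≤ k :=
  forall_congr' fun i =>
    (hA.degree_vecMul_le_iff (P i) k).trans (hB.degree_vecMul_le_iff (P i) k).symm

-- Multiplying row `i` by `X ^ (d i₀ - d i)` lines its leading coefficients up in degree `d i₀`,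
-- where the relation `v` cancels them.
lemma degree_vecMul_C_mul_X_pow_lt (hA : ∀ i j, (A i j).degree ≤ d i) {v : m → R}
    (hv : v ᵥ* rowCoeff A d = 0) {i₀ : m} (hi₀ : ∀ i, v i ≠ 0 → d i ≤ d i₀) (j : n) :
    (((fun i => C (v i) * X ^ (d i₀ - d i)) ᵥ* A) j).degree < d i₀ := by
  have hdeg (i : m) : (C (v i) * X ^ (d i₀ - d i) : R[X]).degree + d i ≤ d i₀ := by
    by_cases hvi : v i = 0
    · simp [hvi]
    · grw [degree_C_mul_X_pow_le]
      exact_mod_cast (Nat.sub_add_cancel (hi₀ i hvi)).le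
  refine (degree_vecMul_le hA hdeg j).lt_of_ne fun h => ?_
  have hcoeff := coeff_vecMul_of_degree_add_le hA hdeg j
  simp only [coeff_C_mul_X_pow, if_true, hv, Pi.zero_apply] at hcoeff
  exact coeff_ne_zero_of_eq_degree h hcoeff

end RowCoefficients

section Determinant

variable {R ι m : Type*}

lemma coeff_prod_of_degree_le [CommSemiring R] (s : Finset ι) (f : ι → R[X]) (d : ι → ℕ)
    (hf : ∀ i ∈ s, (f i).degree ≤ d i) :
    (∏ i ∈ s, f i).coeff (∑ i ∈ s, d i) = ∏ i ∈ s, (f i).coeff (d i) := by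
  classical
  induction s using Finset.induction_on with
  | empty => simp
  | insert a s ha ih =>
    rw [Finset.forall_mem_insert] at hf
    have hprod : (∏ i ∈ s, f i).natDegree ≤ ∑ i ∈ s, d i :=
      (natDegree_prod_le s f).trans
        (Finset.sum_le_sum fun i hi => natDegree_le_of_degree_le (hf.2 i hi))
    rw [Finset.prod_insert ha, Finset.sum_insert ha, Finset.prod_insert ha, ← ih hf.2,
      coeff_mul_add_eq_of_natDegree_le (natDegree_le_of_degree_le hf.1) hprod]

variable [CommRing R] [Fintype m] [DecidableEq m] {A : Matrix m m R[X]} {d : m → ℕ}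

lemma degree_det_le (hA : ∀ i j, (A i j).degree ≤ d i) : A.det.degree ≤ ↑(∑ i, d i) := by
  rw [det_apply]
  refine (degree_sum_le _ _).trans (Finset.sup_le fun σ _ => (degree_smul_le _ _).trans ?_)
  calc (∏ i, A (σ i) i).degree
      ≤ ∑ i, (A (σ i) i).degree := degree_prod_le _ _
    _ ≤ ∑ i, (d (σ i) : WithBot ℕ) := Finset.sum_le_sum fun i _ => hA (σ i) i
    _ = ↑(∑ i, d i) := by rw [Equiv.sum_comp σ fun i => (d i : WithBot ℕ), Nat.cast_sum]

lemma coeff_det_of_degree_le (hA : ∀ i j, (A i j).degree ≤ d i) :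
    A.det.coeff (∑ i, d i) = (rowCoeff A d).det := by
  rw [det_apply, det_apply, finsetSum_coeff]
  refine Finset.sum_congr rfl fun σ _ => ?_
  rw [coeff_smul, ← Equiv.sum_comp σ d,
    coeff_prod_of_degree_le _ (fun i => A (σ i) i) (fun i => d (σ i)) fun i _ => hA (σ i) i]
  rfl

theorem IsRowReduced.degree_det [Nontrivial R] (hA : IsRowReduced A d) :
    A.det.degree = ↑(∑ i, d i) := by
  refine (degree_det_le hA.degree_le).antisymm (le_degree_of_ne_zero ?_)
  rw [coeff_det_of_degree_le hA.degree_le]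
  exact nonZeroDivisors.ne_zero
    (nonsingular_iff_det_mem_nonZeroDivisors.mp (.of_linearIndependent_row hA.linearIndependent))

end Determinant

section RowReduction

variable {F m n : Type*} [Field F] [Fintype m] [DecidableEq m] {A : Matrix m n F[X]}

lemma exists_gl_mul_degree_le_sum_lt (hA : LinearIndependent F[X] A.row)
    {d : m → ℕ} (hd : ∀ i j, (A i j).degree ≤ d i)
    (hdep : ¬ LinearIndependent F (rowCoeff A d).row) :
    ∃ (u : GL m F[X]) (d' : m → ℕ),
      (∀ i j, (((u : Matrix m m F[X]) * A) i j).degree ≤ d' i) ∧ ∑ i, d' i < ∑ i, d i := by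
  classical
  obtain ⟨v, hv, i₁, hi₁⟩ := Fintype.not_linearIndependent_iff.mp hdep
  obtain ⟨i₀, hi₀, hmax⟩ := (Finset.univ.filter (v · ≠ 0)).exists_max_image d ⟨i₁, by simpa⟩
  simp only [Finset.mem_filter_univ] at hi₀ hmax
  set c : m → F[X] := fun i => C (v i) * X ^ (d i₀ - d i)
  have hci₀ : c i₀ = C (v i₀) := by simp [c]
  have hlt (j : n) : ((c ᵥ* A) j).degree < d i₀ :=
    degree_vecMul_C_mul_X_pow_lt hd ((vecMul_eq_sum _ _).trans hv) hmax j
  have hpos : 0 < d i₀ := by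
    rw [Nat.pos_iff_ne_zero]
    intro h
    have hrow : c ᵥ* A = 0 ᵥ* A := by
      ext1 j
      simpa [h, Nat.WithBot.lt_zero_iff] using hlt j
    have := congrFun (vecMul_injective_iff.mpr hA hrow) i₀
    simp [hci₀, hi₀] at this
  obtain ⟨u, hu⟩ := exists_gl_mul_eq_updateRow i₀ c A (hci₀ ▸ isUnit_C.mpr hi₀.isUnit)
  refine ⟨u, Function.update d i₀ (d i₀ - 1), fun i j => ?_,
    Fintype.sum_strictMono (update_lt_self_iff.mpr (Nat.sub_lt hpos one_pos))⟩
  rw [hu]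
  rcases eq_or_ne i i₀ with rfl | hi
  · rw [updateRow_self, Function.update_self, degree_le_iff_coeff_zero]
    intro k hk
    refine coeff_eq_zero_of_degree_lt ((hlt j).trans_le ?_)
    norm_cast at hk ⊢
    lia
  · simpa [hi] using hd i j

lemma exists_gl_mul_isRowReduced_of_degree_le (hA : LinearIndependent F[X] A.row) {d : m → ℕ}
    (hd : ∀ i j, (A i j).degree ≤ d i) :
    ∃ (u : GL m F[X]) (d' : m → ℕ), IsRowReduced ((u : Matrix m m F[X]) * A) d' := by
  induction hs : ∑ i, d i using Nat.strong_induction_on generalizing A d with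
  | h s ih =>
    by_cases hred : LinearIndependent F (rowCoeff A d).row
    · exact ⟨1, d, by simpa using ⟨hd, hred⟩⟩
    · obtain ⟨u, d', hd', hlt⟩ := exists_gl_mul_degree_le_sum_lt hA hd hred
      have huA := linearIndependent_row_mul (linearIndependent_rows_of_isUnit u.isUnit) hA
      obtain ⟨w, e, he⟩ := ih _ (hs ▸ hlt) huA hd' rfl
      exact ⟨w * u, e, by rwa [Units.val_mul, Matrix.mul_assoc]⟩

theorem exists_gl_mul_isRowReduced [Finite n] (hA : LinearIndependent F[X] A.row) :
    ∃ (u : GL m F[X]) (d : m → ℕ), IsRowReduced ((u : Matrix m m F[X]) * A) d := by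
  have := Fintype.ofFinite n
  exact exists_gl_mul_isRowReduced_of_degree_le hA
    (d := fun i => Finset.univ.sup fun j => (A i j).natDegree) fun i j =>
      degree_le_of_natDegree_le <|
        Finset.le_sup (f := fun j => (A i j).natDegree) (Finset.mem_univ j)

theorem exists_gl_isRowReduced_degree_det_submatrix_le [Fintype n] [DecidableEq n] (e : n ↪ m)
    {M : Matrix m m F[X]} (hM : ∀ i ∉ Set.range e, ∀ j, M i (e j) = 0)
    (hdet : M.det ≠ 0) :
    ∃ (u : GL m F[X]) (d : m → ℕ), IsRowReduced ((u : Matrix m m F[X]) * M) d ∧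
      (M.submatrix e e).det.degree ≤ ↑(∑ j, d (e j)) := by
  obtain ⟨u₀, d₀, hred⟩ := exists_gl_mul_isRowReduced (linearIndependent_rows_of_det_ne_zero hdet)
  obtain ⟨σ, hσ⟩ := exists_perm_submatrix_det_ne_zero u₀.det_ne_zero e
  obtain ⟨u, hu⟩ := exists_gl_eq_submatrix σ u₀
  have hredσ : IsRowReduced ((u : Matrix m m F[X]) * M) (d₀ ∘ σ) := by
    rw [hu]
    exact hred.submatrix_left σ.injective
  refine ⟨u, d₀ ∘ σ, hredσ, ?_⟩
  have hminor : ((u : Matrix m m F[X]).submatrix e e).det ≠ 0 := by rwa [hu]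
  calc (M.submatrix e e).det.degree
      ≤ (((u : Matrix m m F[X]) * M).submatrix e e).det.degree := by
        rw [submatrix_mul_of_forall_notMem_range _ _ e e e hM, det_mul, mul_comm]
        exact degree_le_mul_left _ hminor
    _ ≤ _ := degree_det_le (d := fun j => d₀ (σ (e j))) fun i j => hredσ.degree_le (e i) (e j)

end RowReduction

theorem stmt_2_general {F m n : Type*} [Field F] [Fintype m] [DecidableEq m] [Fintype n]
    [DecidableEq n] (e : n ↪ m) (M : Matrix m m F[X])
    (hM : ∀ i ∉ Set.range e, ∀ j, M i (e j) = 0) (hdet : M.det ≠ 0) :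
    ∃ (M' : Matrix m m F[X]) (u : GL m F[X]), M'.IsDiag ∧
      (M.submatrix e e).det.degree ≤ (M'.submatrix e e).det.degree ∧
      M'.det.degree = M.det.degree ∧
      ∀ (g : GL m F[X]) (k : ℕ),
        (∀ i j, ((((g * u : GL m F[X]) : Matrix m m F[X]) * M) i j).degree ≤ k) ↔
          ∀ i j, (((g : Matrix m m F[X]) * M') i j).degree ≤ k := by
  obtain ⟨u, d, hred, hD⟩ := exists_gl_isRowReduced_degree_det_submatrix_le e hM hdet
  have hdiag := isRowReduced_diagonal_X_pow (R := F) d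
  refine ⟨diagonal fun i => X ^ d i, u, isDiag_diagonal _, ?_, ?_, fun g k => ?_⟩
  · rwa [submatrix_diagonal_embedding, Function.comp_def,
      (isRowReduced_diagonal_X_pow fun j => d (e j)).degree_det]
  · rw [hdiag.degree_det, ← hred.degree_det, det_mul, degree_mul,
      degree_eq_zero_of_isUnit ((isUnit_iff_isUnit_det _).mp u.isUnit), zero_add]
  · rw [Units.val_mul, Matrix.mul_assoc]
    exact hred.forall_degree_mul_le_iff hdiag _ k

/-- Given `1 ≤ l ≤ n` and an upper-triangular `n × n` matrix `M` over `F[x]`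
with `det M ≠ 0`, there is an upper-triangular matrix `M'` whose top-left `l × l` block is
diagonal, with `deg det D' ≥ deg det D`, `deg det M' = deg det M`, and such that for every `k`
the number of `g ∈ GL_n(F[x])` with `gM` satisfying `P(k)` equals the number of
`g ∈ GL_n(F[x])` with `gM'` satisfying `P(k)`. -/
theorem stmt_2 (F : Type*) [Field F] [Fintype F]
    (n l : ℕ) (hl1 : 1 ≤ l) (hln : l ≤ n)
    (M : Matrix (Fin n) (Fin n) F[X])
    (hMtri : ∀ i j : Fin n, (j : ℕ) < (i : ℕ) → M i j = 0)
    (hdet : M.det ≠ 0) :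
    ∃ M' : Matrix (Fin n) (Fin n) F[X],
      (∀ i j : Fin n, (j : ℕ) < (i : ℕ) → M' i j = 0) ∧
      (∀ i j : Fin l, i ≠ j →
        M' (Fin.castLE hln i) (Fin.castLE hln j) = 0) ∧
      (Matrix.det (fun i j : Fin l => M (Fin.castLE hln i) (Fin.castLE hln j))).degree ≤
        (Matrix.det (fun i j : Fin l => M' (Fin.castLE hln i) (Fin.castLE hln j))).degree ∧
      (M'.det).degree = M.det.degree ∧
      ∀ k : ℕ,
        {g : GL (Fin n) F[X] |
            ∀ i j, (((g : Matrix (Fin n) (Fin n) F[X]) * M) i j).degree ≤ (k : ℕ)}.ncard =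
        {g : GL (Fin n) F[X] |
            ∀ i j, (((g : Matrix (Fin n) (Fin n) F[X]) * M') i j).degree ≤ (k : ℕ)}.ncard := by
  obtain ⟨M', u, hdiag, hD, hdetM', hP⟩ := stmt_2_general (Fin.castLEEmb hln) M
    (fun i hi j => hMtri i _ (j.isLt.trans_le (by simpa using hi))) hdet
  exact ⟨M', fun i j hij => hdiag (by lia), fun i j hij => hdiag (by simpa), hD, hdetM',
    fun k => (Nat.card_congr ((Equiv.mulRight u).subtypeEquiv fun g => (hP g k).symm)).symm⟩
end

section
/- Let F be a finite field with q elements and let k_1, …, k_n be natural numbers. Then the number of matrices A = (a_{i,j}) ∈ GL_n(F[x]) such that deg(a_{i,j}) ≤ k_j for all 1 ≤ i, j ≤ n equals #GL_n(F) · q^{(n-1)(k_1 + k_2 + ⋯ + k_n)}, where #GL_n(F) is the number of invertible n×n matrices over F. -/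
open Polynomial Matrix

/-!
Fix column degree bounds `d`. For a set `T` of columns, count the invertible matrices within these
bounds whose leading coefficient vectors (the coefficients of `X ^ d j` in column `j`) are linearly
independent on `T`. If `j ∉ T` has `d j > 0` and `d j` is at least every bound on `T`, then such a
matrix either stays independent on `T ∪ {j}`, or its `j`-th leading vector is a unique combination
of those on `T`; in the latter case one column operation cancels that vector, which lowers `d j` by
one and gives a recurrence.

The expected closed form satisfies the same recurrence. By induction on `d`, the error between count
and closed form therefore does not change when `j` is added to `T`, and any `T` can be built from
`∅` by adding columns in increasing order of `d`. So the error is independent of `T`, and it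
vanishes at `T = univ` for `d ≠ 0`: the determinant of the leading coefficient matrix is the
coefficient of the constant `det A` in degree `∑ j, d j > 0`, so no matrix is counted. The
matrices in the theorem are those for `T = ∅`.
-/

section LeadingCoefficients

variable {m n R : Type*}

/-- The matrix of leading coefficients of a polynomial matrix relative to the column degree bounds
`d`: column `j` holds the coefficients of `X ^ d j`, which may vanish. -/
def leadingColMatrix [Semiring R] (d : n → ℕ) (A : Matrix m n R[X]) : Matrix m n R :=
  of fun i j => (A i j).coeff (d j)

@[simp]
theorem leadingColMatrix_apply [Semiring R] (d : n → ℕ) (A : Matrix m n R[X]) (i : m) (j : n) :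
    leadingColMatrix d A i j = (A i j).coeff (d j) :=
  rfl

/-- The polynomial matrix `A` has column degrees at most `d`. -/
def HasColDegreeLE [Semiring R] (d : n → ℕ) (A : Matrix m n R[X]) : Prop :=
  ∀ i j, (A i j).natDegree ≤ d j

theorem coeff_prod_sum_of_natDegree_le [CommSemiring R] {ι : Type*} (s : Finset ι) (f : ι → R[X])
    (d : ι → ℕ) (h : ∀ i ∈ s, (f i).natDegree ≤ d i) :
    (∏ i ∈ s, f i).coeff (∑ i ∈ s, d i) = ∏ i ∈ s, (f i).coeff (d i) := by
  classical
  induction s using Finset.induction_on with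
  | empty => simp
  | insert a s ha ih =>
    have hs : ∀ i ∈ s, (f i).natDegree ≤ d i := fun i hi => h i (Finset.mem_insert_of_mem hi)
    have hprod : (∏ i ∈ s, f i).natDegree ≤ ∑ i ∈ s, d i :=
      (natDegree_prod_le s f).trans (Finset.sum_le_sum hs)
    rw [Finset.prod_insert ha, Finset.sum_insert ha, Finset.prod_insert ha,
      coeff_mul_add_eq_of_natDegree_le (h a (Finset.mem_insert_self a s)) hprod, ih hs]

theorem HasColDegreeLE.coeff_det [CommRing R] [Fintype n] [DecidableEq n] {d : n → ℕ}
    {A : Matrix n n R[X]} (hA : HasColDegreeLE d A) :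
    A.det.coeff (∑ j, d j) = (leadingColMatrix d A).det := by
  rw [det_apply, det_apply, finsetSum_coeff]
  refine Finset.sum_congr rfl fun σ _ => ?_
  rw [coeff_smul, coeff_prod_sum_of_natDegree_le _ _ d fun j _ => hA (σ j) j]
  simp only [leadingColMatrix_apply]

theorem hasColDegreeLE_iff_add_single [Semiring R] [DecidableEq n] {d : n → ℕ} {j : n}
    {A : Matrix m n R[X]} :
    HasColDegreeLE d A ↔ HasColDegreeLE (d + Pi.single j 1) A ∧
      (leadingColMatrix (d + Pi.single j 1) A).col j = 0 := by
  constructor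
  · intro hA
    refine ⟨fun i l => (hA i l).trans (by simp), funext fun i => ?_⟩
    exact coeff_eq_zero_of_natDegree_lt (by simpa using Nat.lt_succ_of_le (hA i j))
  · rintro ⟨hA, hlead⟩ i l
    obtain rfl | hl := eq_or_ne l j
    · have hdeg : (A i l).natDegree ≤ d l + 1 := by simpa using hA i l
      exact natDegree_le_pred hdeg (by simpa using congrFun hlead i)
    · simpa [hl] using hA i l

theorem leadingColMatrix_add_single_col_of_ne [Semiring R] [DecidableEq n] (d : n → ℕ) {j l : n}
    (hl : l ≠ j) (A : Matrix m n R[X]) :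
    (leadingColMatrix (d + Pi.single j 1) A).col l = (leadingColMatrix d A).col l := by
  ext i
  simp [hl]

theorem finite_setOf_natDegree_le [Semiring R] [Finite R] (N : ℕ) :
    {p : R[X] | p.natDegree ≤ N}.Finite := by
  have : Finite (degreeLT R (N + 1)) := Finite.of_equiv _ (degreeLTEquiv R (N + 1)).symm.toEquiv
  refine (Set.toFinite (degreeLT R (N + 1) : Set R[X])).subset fun p hp => ?_
  exact mem_degreeLT.mpr (degree_le_natDegree.trans_lt (by exact_mod_cast Nat.lt_succ_of_le hp))

theorem finite_setOf_hasColDegreeLE [Semiring R] [Finite R] [Finite m] [Finite n] (d : n → ℕ) :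
    {A : Matrix m n R[X] | HasColDegreeLE d A}.Finite :=
  Set.Finite.pi' fun _ => Set.Finite.pi' fun j => finite_setOf_natDegree_le (d j)

end LeadingCoefficients

section ColumnOperations

variable {m n R : Type*} [DecidableEq n] {T : Finset n} {j : n} {d : n → ℕ}

theorem det_updateCol_add_sum [CommRing R] [Fintype n] (A : Matrix n n R) (hj : j ∉ T)
    (c : T → R) : (A.updateCol j (A.col j + ∑ i, c i • A.col i)).det = A.det := by
  have hcol (i : T) : (A.updateCol j (c i • A.col i)).det = 0 := by
    rw [det_updateCol_smul, det_zero_of_column_eq (ne_of_mem_of_not_mem i.2 hj), mul_zero]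
    intro l
    simp [ne_of_mem_of_not_mem i.2 hj]
  have hsum (s : Finset T) : (A.updateCol j (∑ i ∈ s, c i • A.col i)).det = 0 := by
    induction s using Finset.induction_on with
    | empty => exact det_eq_zero_of_column_eq_zero j (by simp)
    | insert i s hi ih => rw [Finset.sum_insert hi, det_updateCol_add, hcol, ih, add_zero]
  rw [det_updateCol_add, hsum, add_zero]
  exact congrArg det (updateCol_eq_self A j)

/-- Add to column `j` the combination of the columns in `T` with coefficients `v i`, each column
scaled by the power of `X` that raises its degree bound `d i` to `d j`. This is the intended power
only for `d i ≤ d j`, because the subtraction is truncated. -/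
noncomputable def addCols [Semiring R] (d : n → ℕ) (j : n) (v : T → R) (A : Matrix m n R[X]) :
    Matrix m n R[X] :=
  A.updateCol j (A.col j + ∑ i : T, monomial (d j - d i) (v i) • A.col i)

theorem addCols_apply_self [Semiring R] (v : T → R) (A : Matrix m n R[X]) (i : m) :
    addCols d j v A i j = A i j + ∑ l : T, monomial (d j - d l) (v l) * A i l := by
  simp [addCols]

theorem addCols_apply_of_ne [Semiring R] {l : n} (hl : l ≠ j) (v : T → R) (A : Matrix m n R[X])
    (i : m) : addCols d j v A i l = A i l := by
  simp [addCols, hl]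

theorem leadingColMatrix_addCols_col_of_ne [Semiring R] {l : n} (hl : l ≠ j) (v : T → R)
    (A : Matrix m n R[X]) :
    (leadingColMatrix d (addCols d j v A)).col l = (leadingColMatrix d A).col l := by
  ext i
  simp [addCols_apply_of_ne hl]

theorem leadingColMatrix_addCols_col_self [Semiring R] (hd : ∀ i ∈ T, d i ≤ d j) (v : T → R)
    (A : Matrix m n R[X]) :
    (leadingColMatrix d (addCols d j v A)).col j =
      (leadingColMatrix d A).col j + ∑ i : T, v i • (leadingColMatrix d A).col i := by
  ext i
  have hterm (l : T) : (monomial (d j - d l) (v l) * A i l).coeff (d j) =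
      v l * (A i l).coeff (d l) := by
    conv_lhs => enter [2]; rw [← Nat.add_sub_of_le (hd l l.2)]
    exact coeff_monomial_mul _ _ _ _
  simp [addCols_apply_self, finsetSum_coeff, hterm]

theorem HasColDegreeLE.addCols [Semiring R] (hd : ∀ i ∈ T, d i ≤ d j) (v : T → R)
    {A : Matrix m n R[X]} (hA : HasColDegreeLE d A) : HasColDegreeLE d (addCols d j v A) := by
  intro i l
  obtain rfl | hl := eq_or_ne l j
  · rw [addCols_apply_self]
    refine natDegree_add_le_of_degree_le (hA i l) ?_
    refine natDegree_sum_le_of_forall_le _ _ fun t _ => ?_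
    calc (monomial (d l - d t) (v t) * A i t).natDegree
        ≤ (d l - d t) + d t := natDegree_mul_le_of_le (natDegree_monomial_le _) (hA i t)
      _ = d l := Nat.sub_add_cancel (hd t t.2)
  · rw [addCols_apply_of_ne hl]
    exact hA i l

theorem addCols_neg_addCols [Ring R] (hj : j ∉ T) (v : T → R) (A : Matrix m n R[X]) :
    addCols d j (-v) (addCols d j v A) = A := by
  ext1 i l
  obtain rfl | hl := eq_or_ne l j
  · have hne (t : T) : (t : n) ≠ l := ne_of_mem_of_not_mem t.2 hj
    simp [addCols_apply_self, addCols_apply_of_ne (hne _)]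
  · simp only [addCols_apply_of_ne hl]

theorem det_addCols [CommRing R] [Fintype n] (hj : j ∉ T) (v : T → R) (A : Matrix n n R[X]) :
    (addCols d j v A).det = A.det :=
  det_updateCol_add_sum A hj _

end ColumnOperations

theorem ncard_isUnit_and {M : Type*} [Monoid M] (p : M → Prop) :
    {a | IsUnit a ∧ p a}.ncard = {u : Mˣ | p u}.ncard := by
  rw [← Set.ncard_image_of_injective _ Units.val_injective]
  congr 1
  ext a
  constructor
  · rintro ⟨⟨u, rfl⟩, hu⟩
    exact ⟨u, hu, rfl⟩
  · rintro ⟨u, hu, rfl⟩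
    exact ⟨u.isUnit, hu⟩

section ColumnReduced

variable {ι F : Type*} [Fintype ι] [DecidableEq ι] [Field F]

/-- The invertible polynomial matrices with column degrees at most `d` whose leading coefficient
vectors, relative to `d`, are linearly independent on the columns in `T`. For `T = univ` these are
the column reduced matrices with all column degrees equal to `d`. -/
def colReducedOn (F : Type*) [Field F] (d : ι → ℕ) (T : Finset ι) : Set (Matrix ι ι F[X]) :=
  {A | IsUnit A ∧ HasColDegreeLE d A ∧ LinearIndepOn F (leadingColMatrix d A).col T}

variable {d : ι → ℕ} {T : Finset ι} {j : ι} {A : Matrix ι ι F[X]}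

theorem finite_colReducedOn [Finite F] (d : ι → ℕ) (T : Finset ι) : (colReducedOn F d T).Finite :=
  (finite_setOf_hasColDegreeLE d).subset fun _ hA => hA.2.1

theorem colReducedOn_univ_eq_empty (hd : d ≠ 0) : colReducedOn F d Finset.univ = ∅ := by
  refine Set.eq_empty_iff_forall_notMem.mpr fun A ⟨hunit, hdeg, hindep⟩ => ?_
  have hsum : 0 < ∑ j, d j := by
    rw [Finset.sum_pos_iff]
    simpa [funext_iff, Nat.pos_iff_ne_zero] using hd
  have hdet : (leadingColMatrix d A).det = 0 := by
    rw [← hdeg.coeff_det]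
    apply coeff_eq_zero_of_natDegree_lt
    rwa [natDegree_eq_zero_of_isUnit ((isUnit_iff_isUnit_det A).mp hunit)]
  rw [Finset.coe_univ, linearIndepOn_univ_iff, linearIndependent_cols_iff_isUnit,
    isUnit_iff_isUnit_det, hdet] at hindep
  exact not_isUnit_zero hindep

theorem colReducedOn_eq_of_forall_eq_zero (hT : ∀ j ∈ T, d j = 0) :
    colReducedOn F d T = colReducedOn F d ∅ := by
  refine Set.ext fun A => ⟨fun hA => ⟨hA.1, hA.2.1, by simp⟩, fun ⟨hunit, hdeg, _⟩ => ?_⟩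
  refine ⟨hunit, hdeg, ?_⟩
  have hindep : LinearIndependent F A.col :=
    (linearIndependent_cols_of_det_ne_zero
      ((isUnit_iff_isUnit_det A).mp hunit).ne_zero).restrict_scalars' F
  have hconst : ∀ j ∈ T, A.col j = C ∘ (leadingColMatrix d A).col j := by
    intro j hj
    ext1 i
    have hdeg0 : (A i j).natDegree ≤ 0 := hT j hj ▸ hdeg i j
    simpa [hT j hj] using eq_C_of_natDegree_le_zero hdeg0
  exact LinearIndepOn.of_comp ((Algebra.linearMap F F[X]).compLeft ι)
    ((linearIndepOn_congr hconst).mp (hindep.linearIndepOn T))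

theorem mem_colReducedOn_insert (hj : j ∉ T) :
    A ∈ colReducedOn F d (insert j T) ↔ A ∈ colReducedOn F d T ∧
      (leadingColMatrix d A).col j ∉ Submodule.span F ((leadingColMatrix d A).col '' T) := by
  simp only [colReducedOn, Set.mem_ofPred_eq, Finset.coe_insert,
    linearIndepOn_insert (Finset.mem_coe.not.mpr hj), and_assoc]

theorem mem_colReducedOn_iff_add_single (hj : j ∉ T) :
    A ∈ colReducedOn F d T ↔ A ∈ colReducedOn F (d + Pi.single j 1) T ∧
      (leadingColMatrix (d + Pi.single j 1) A).col j = 0 := by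
  have hindep : LinearIndepOn F (leadingColMatrix (d + Pi.single j 1) A).col T ↔
      LinearIndepOn F (leadingColMatrix d A).col T :=
    linearIndepOn_congr fun i hi =>
      leadingColMatrix_add_single_col_of_ne d (ne_of_mem_of_not_mem hi hj) A
  simp only [colReducedOn, Set.mem_ofPred_eq, hindep,
    hasColDegreeLE_iff_add_single (d := d) (j := j)]
  tauto

theorem addCols_mem_colReducedOn (hj : j ∉ T) (hd : ∀ i ∈ T, d i ≤ d j) (v : T → F)
    (hA : A ∈ colReducedOn F d T) : addCols d j v A ∈ colReducedOn F d T := by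
  obtain ⟨hunit, hdeg, hindep⟩ := hA
  refine ⟨?_, hdeg.addCols hd v, (linearIndepOn_congr fun i hi => ?_).mpr hindep⟩
  · rwa [isUnit_iff_isUnit_det, det_addCols hj, ← isUnit_iff_isUnit_det]
  · exact leadingColMatrix_addCols_col_of_ne (ne_of_mem_of_not_mem hi hj) v A

theorem injOn_addCols (hj : j ∉ T) (hd : ∀ i ∈ T, d i ≤ d j) :
    Set.InjOn (fun p : (T → F) × Matrix ι ι F[X] => addCols d j p.1 p.2)
      (Set.univ ×ˢ {A ∈ colReducedOn F d T | (leadingColMatrix d A).col j = 0}) := by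
  rintro ⟨v, A⟩ ⟨-, hA, hA0⟩ ⟨w, B⟩ ⟨-, hB, hB0⟩ (h : addCols d j v A = addCols d j w B)
  have hcol (i : T) : (leadingColMatrix d B).col i = (leadingColMatrix d A).col i := by
    have hij := ne_of_mem_of_not_mem i.2 hj
    rw [← leadingColMatrix_addCols_col_of_ne hij w, ← h, leadingColMatrix_addCols_col_of_ne hij]
  have hcomb : ∑ i : T, v i • (leadingColMatrix d A).col i =
      ∑ i : T, w i • (leadingColMatrix d A).col i := by
    have hlead := congrArg (fun M => (leadingColMatrix d M).col j) h
    simpa only [leadingColMatrix_addCols_col_self hd, hA0, hB0, zero_add, hcol] using hlead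
  obtain rfl : v = w := hA.2.2.fintypeLinearCombination_injective hcomb
  rw [Prod.mk.injEq, ← addCols_neg_addCols hj v A, h, addCols_neg_addCols hj]
  exact ⟨rfl, rfl⟩

theorem bijOn_addCols (hj : j ∉ T) (hd : ∀ i ∈ T, d i ≤ d j) :
    Set.BijOn (fun p : (T → F) × Matrix ι ι F[X] => addCols d j p.1 p.2)
      (Set.univ ×ˢ {A ∈ colReducedOn F d T | (leadingColMatrix d A).col j = 0})
      (colReducedOn F d T \ colReducedOn F d (insert j T)) := by
  have hdiff (A : Matrix ι ι F[X]) : A ∈ colReducedOn F d T \ colReducedOn F d (insert j T) ↔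
      A ∈ colReducedOn F d T ∧
        ∃ v : T → F, ∑ i, v i • (leadingColMatrix d A).col i = (leadingColMatrix d A).col j := by
    rw [Set.mem_sdiff, mem_colReducedOn_insert hj, ← Submodule.mem_span_image_finset_iff_exists_fun]
    tauto
  refine ⟨?_, injOn_addCols hj hd, ?_⟩
  · rintro ⟨v, A⟩ ⟨-, hA, hA0⟩
    refine (hdiff _).mpr ⟨addCols_mem_colReducedOn hj hd v hA, v, ?_⟩
    rw [leadingColMatrix_addCols_col_self hd, hA0, zero_add]
    exact Finset.sum_congr rfl fun i _ => by
      rw [leadingColMatrix_addCols_col_of_ne (ne_of_mem_of_not_mem i.2 hj)]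
  · intro A hA
    obtain ⟨hA, v, hv⟩ := (hdiff A).mp hA
    refine ⟨(v, addCols d j (-v) A),
      ⟨Set.mem_univ _, addCols_mem_colReducedOn hj hd (-v) hA, ?_⟩, ?_⟩
    · simp [leadingColMatrix_addCols_col_self hd, ← hv]
    · simpa using addCols_neg_addCols hj (-v) A

theorem ncard_colReducedOn_add_single [Finite F] (d : ι → ℕ) (hj : j ∉ T)
    (hd : ∀ i ∈ T, d i ≤ d j + 1) :
    (colReducedOn F (d + Pi.single j 1) T).ncard =
      (colReducedOn F (d + Pi.single j 1) (insert j T)).ncard +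
        Nat.card F ^ T.card * (colReducedOn F d T).ncard := by
  set e := d + Pi.single j 1 with he
  have hde : ∀ i ∈ T, e i ≤ e j := fun i hi => by
    simpa [he, ne_of_mem_of_not_mem hi hj] using hd i hi
  have hsub : colReducedOn F e (insert j T) ⊆ colReducedOn F e T :=
    fun A hA => ((mem_colReducedOn_insert hj).mp hA).1
  have hdrop : colReducedOn F d T = {A ∈ colReducedOn F e T | (leadingColMatrix e A).col j = 0} :=
    Set.ext fun A => mem_colReducedOn_iff_add_single hj
  rw [← Set.ncard_sdiff_add_ncard_of_subset hsub (finite_colReducedOn e T),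
    ← (bijOn_addCols hj hde).ncard_eq, ← hdrop, Set.ncard_prod, Set.ncard_univ, Nat.card_fun,
    Nat.card_eq_fintype_card (α := T), Fintype.card_coe, add_comm]

theorem colReducedOn_empty (d : ι → ℕ) :
    colReducedOn F d ∅ = {A | IsUnit A ∧ HasColDegreeLE d A} := by
  simp [colReducedOn]

theorem ncard_colReducedOn_zero_empty :
    (colReducedOn F (0 : ι → ℕ) ∅).ncard = Nat.card (GL ι F) := by
  have hC : Function.Injective (C.mapMatrix : Matrix ι ι F →+* Matrix ι ι F[X]) :=
    Matrix.map_injective C_injective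
  have himage : colReducedOn F (0 : ι → ℕ) ∅ = C.mapMatrix '' {A : Matrix ι ι F | IsUnit A} := by
    rw [colReducedOn_empty]
    ext A
    constructor
    · rintro ⟨hunit, hdeg⟩
      obtain ⟨B, rfl⟩ : ∃ B : Matrix ι ι F, C.mapMatrix B = A :=
        ⟨A.map (coeff · 0), Matrix.ext fun i j => (eq_C_of_natDegree_le_zero (hdeg i j)).symm⟩
      refine ⟨B, ?_, rfl⟩
      rwa [isUnit_iff_isUnit_det, ← RingHom.map_det, isUnit_C, ← isUnit_iff_isUnit_det] at hunit
    · rintro ⟨B, hB, rfl⟩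
      exact ⟨hB.map _, fun i j => by simp⟩
  rw [himage, Set.ncard_image_of_injective _ hC]
  simpa [Set.ncard_univ] using ncard_isUnit_and fun _ : Matrix ι ι F => True

end ColumnReduced

section ColumnReducedProportion

variable {ι : Type*} [Fintype ι] {d : ι → ℕ} {T : Finset ι} {j : ι}

/-- The proportion of the matrices in `colReducedOn F d T` among those in `colReducedOn F d ∅`, for
`q` the cardinality of `F`. The columns with degree bound zero contribute no factor, because the
leading coefficient vectors of an invertible matrix are always independent on them. -/
def colReducedProportion (q : ℚ) (d : ι → ℕ) (T : Finset ι) : ℚ :=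
  ∏ i ∈ Finset.Ico (T.filter (d · = 0)).card T.card, (1 - q ^ i / q ^ (Fintype.card ι - 1))

theorem colReducedProportion_of_forall_eq_zero (q : ℚ) (hT : ∀ j ∈ T, d j = 0) :
    colReducedProportion q d T = 1 := by
  simp [colReducedProportion, Finset.filter_true_of_mem hT]

theorem colReducedProportion_univ_eq_zero {q : ℚ} (hq : q ≠ 0) (hd : d ≠ 0) :
    colReducedProportion q d Finset.univ = 0 := by
  obtain ⟨j, hj⟩ := Function.ne_iff.mp hd
  have hlt : (Finset.univ.filter (d · = 0)).card < Fintype.card ι :=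
    Finset.card_lt_card (Finset.filter_ssubset.mpr ⟨j, Finset.mem_univ j, hj⟩)
  refine Finset.prod_eq_zero (i := Fintype.card ι - 1) ?_ ?_
  · rw [Finset.card_univ, Finset.mem_Ico]
    omega
  · rw [div_self (pow_ne_zero _ hq), sub_self]

theorem colReducedProportion_add_single [DecidableEq ι] (q : ℚ) (d : ι → ℕ) (hj : j ∉ T) :
    colReducedProportion q (d + Pi.single j 1) T = colReducedProportion q d T := by
  have hfilter : T.filter ((d + Pi.single j 1 : ι → ℕ) · = 0) = T.filter (d · = 0) :=
    Finset.filter_congr fun i hi => by simp [ne_of_mem_of_not_mem hi hj]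
  rw [colReducedProportion, hfilter, colReducedProportion]

theorem colReducedProportion_insert [DecidableEq ι] (q : ℚ) (hdj : d j ≠ 0) (hj : j ∉ T) :
    colReducedProportion q d (insert j T) =
      colReducedProportion q d T * (1 - q ^ T.card / q ^ (Fintype.card ι - 1)) := by
  rw [colReducedProportion, Finset.filter_insert, if_neg hdj, Finset.card_insert_of_notMem hj,
    Finset.prod_Ico_succ_top (Finset.card_filter_le _ _), colReducedProportion]

end ColumnReducedProportion

section Counting

variable {ι F : Type*} [Fintype ι] [DecidableEq ι] [Field F] {d : ι → ℕ} {T : Finset ι} {j : ι}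

/-- The closed form of the cardinality of `colReducedOn F d T`, taken in `ℚ` because the
proportion is a product of fractions. -/
noncomputable def colReducedCard (F : Type*) [Field F] (d : ι → ℕ) (T : Finset ι) : ℚ :=
  Nat.card (GL ι F) * Nat.card F ^ ((Fintype.card ι - 1) * ∑ j, d j) *
    colReducedProportion (Nat.card F) d T

theorem colReducedCard_add_single [Finite F] (d : ι → ℕ) (hj : j ∉ T) :
    colReducedCard F (d + Pi.single j 1) T = colReducedCard F (d + Pi.single j 1) (insert j T) +
      Nat.card F ^ T.card * colReducedCard F d T := by
  have hq : (Nat.card F : ℚ) ^ (Fintype.card ι - 1) ≠ 0 :=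
    pow_ne_zero _ (Nat.cast_ne_zero.mpr Nat.card_pos.ne')
  have hsum : ∑ i, (d + Pi.single j 1 : ι → ℕ) i = ∑ i, d i + 1 := by
    simp [Finset.sum_add_distrib]
  rw [colReducedCard, colReducedCard, colReducedCard, hsum,
    colReducedProportion_insert _ (by simp) hj, colReducedProportion_add_single _ _ hj]
  field_simp
  ring

theorem ncard_colReducedOn_sub_colReducedCard [Finite F]
    (ih : ∀ e < d, ∀ T, ((colReducedOn F e T).ncard : ℚ) = colReducedCard F e T) (T : Finset ι) :
    ((colReducedOn F d T).ncard : ℚ) - colReducedCard F d T =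
      (colReducedOn F d ∅).ncard - colReducedCard F d ∅ := by
  induction T using Finset.induction_on_max_value d with
  | empty => rfl
  | insert j T hj hmax ihT =>
    obtain hdj | hdj := eq_or_ne (d j) 0
    · have hzero : ∀ i ∈ insert j T, d i = 0 := by simpa [hdj] using hmax
      simp [colReducedOn_eq_of_forall_eq_zero hzero, colReducedCard,
        colReducedProportion_of_forall_eq_zero _ hzero, colReducedProportion_of_forall_eq_zero]
    · obtain ⟨e, rfl⟩ : ∃ e, d = e + Pi.single j 1 := by
        refine ⟨d - Pi.single j 1, (tsub_add_cancel_of_le ?_).symm⟩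
        exact update_le_iff.mpr
          ⟨Nat.one_le_iff_ne_zero.mpr hdj, fun _ _ => Nat.zero_le _⟩
      have hmax' : ∀ i ∈ T, e i ≤ e j + 1 := fun i hi => by
        simpa [ne_of_mem_of_not_mem hi hj] using hmax i hi
      have hlt : e < e + Pi.single j 1 := by simp
      have hcount := congrArg (Nat.cast : ℕ → ℚ)
        (ncard_colReducedOn_add_single (F := F) e hj hmax')
      push_cast at hcount
      linear_combination ihT - hcount + colReducedCard_add_single (F := F) e hj -
        (Nat.card F : ℚ) ^ T.card * ih e hlt T

theorem ncard_colReducedOn [Finite F] (d : ι → ℕ) (T : Finset ι) :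
    ((colReducedOn F d T).ncard : ℚ) = colReducedCard F d T := by
  induction d using WellFoundedLT.induction generalizing T with
  | ind d ih =>
    have hdiff := ncard_colReducedOn_sub_colReducedCard ih
    obtain ⟨T₀, hT₀⟩ : ∃ T₀, ((colReducedOn F d T₀).ncard : ℚ) = colReducedCard F d T₀ := by
      obtain rfl | hd := eq_or_ne d 0
      · refine ⟨∅, ?_⟩
        rw [ncard_colReducedOn_zero_empty]
        simp [colReducedCard, colReducedProportion_of_forall_eq_zero]
      · refine ⟨Finset.univ, ?_⟩
        have hq : (Nat.card F : ℚ) ≠ 0 := Nat.cast_ne_zero.mpr Nat.card_pos.ne'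
        simp [colReducedOn_univ_eq_empty hd, colReducedCard,
          colReducedProportion_univ_eq_zero hq hd]
    linear_combination hdiff T - hdiff T₀ + hT₀

end Counting

theorem stmt_4_general {ι F : Type*} [Fintype ι] [DecidableEq ι] [Field F] [Finite F]
    (k : ι → ℕ) :
    {A : GL ι F[X] | ∀ i j, ((A : Matrix ι ι F[X]) i j).degree ≤ k j}.ncard =
      Nat.card (GL ι F) * Nat.card F ^ ((Fintype.card ι - 1) * ∑ j, k j) := by
  have hcount : (colReducedOn F k ∅).ncard =
      Nat.card (GL ι F) * Nat.card F ^ ((Fintype.card ι - 1) * ∑ j, k j) := by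
    have h := ncard_colReducedOn (F := F) k ∅
    rw [colReducedCard, colReducedProportion_of_forall_eq_zero _ (by simp), mul_one] at h
    exact_mod_cast h
  rw [← hcount, colReducedOn_empty, ncard_isUnit_and]
  simp only [HasColDegreeLE, natDegree_le_iff_degree_le]

/-- The number of `A ∈ GL_n(F[x])` with `deg a_{i,j} ≤ k_j` for all `i, j`
equals `#GL_n(F) · q^((n-1)(k₁ + ⋯ + kₙ))`. -/
theorem stmt_4 (F : Type*) [Field F] [Fintype F] (q : ℕ) (hq : Fintype.card F = q)
    (n : ℕ) (k : Fin n → ℕ) :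
    {A : GL (Fin n) F[X] |
        ∀ i j, ((A : Matrix (Fin n) (Fin n) F[X]) i j).degree ≤ (k j : ℕ)}.ncard
      = Nat.card (GL (Fin n) F) * q ^ ((n - 1) * ∑ j, k j) := by
  simpa only [Nat.card_eq_fintype_card (α := F), hq, Fintype.card_fin] using
    stmt_4_general (F := F) k
end
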